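/- If a Latin square L of order 5 has an orthogonal mate, then L ∼ C_1, where C_1 is the cyclic Latin square on ZMod 5 given by C_1 i j = j + i. -/

import Mathlib

/-- The candidate isomorphism from the cyclic group: powers of `1` under `M`. -/
def powMap (M : Fin 5 → Fin 5 → Fin 5) : Fin 5 → Fin 5 :=
  ![0, 1, M 1 1, M 1 (M 1 1), M 1 (M 1 (M 1 1))]

/-- `powMap M` is an isomorphism from the cyclic square. -/
def CycM (M : Fin 5 → Fin 5 → Fin 5) : Prop :=
  (∀ i j, powMap M i = powMap M j → i = j) ∧
    ∀ i j, M (powMap M i) (powMap M j) = powMap M (j + i)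

/-- No transversal of `M` passes through the cell `(0, c0)`. -/
def NoTrans (M : Fin 5 → Fin 5 → Fin 5) (c0 : Fin 5) : Prop :=
  ∀ c1 : Fin 5, c1 ≠ c0 → M 1 c1 ≠ M 0 c0 → 
  ∀ c2 : Fin 5, c2 ≠ c0 → M 2 c2 ≠ M 0 c0 → c2 ≠ c1 → M 2 c2 ≠ M 1 c1 → 
  ∀ c3 : Fin 5, c3 ≠ c0 → M 3 c3 ≠ M 0 c0 → c3 ≠ c1 → M 3 c3 ≠ M 1 c1 → c3 ≠ c2 → M 3 c3 ≠ M 2 c2 → 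
  ∀ c4 : Fin 5, c4 ≠ c0 → M 4 c4 ≠ M 0 c0 → c4 ≠ c1 → M 4 c4 ≠ M 1 c1 → c4 ≠ c2 → M 4 c4 ≠ M 2 c2 → c4 ≠ c3 → M 4 c4 ≠ M 3 c3 → 
  False

instance (M : Fin 5 → Fin 5 → Fin 5) : Decidable (CycM M) := by
  unfold CycM; infer_instance

instance (M : Fin 5 → Fin 5 → Fin 5) (c : Fin 5) : Decidable (NoTrans M c) := by
  unfold NoTrans; infer_instance

set_option maxRecDepth 100000 in
set_option synthInstance.maxHeartbeats 0 in
set_option synthInstance.maxSize 100000 in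
set_option maxHeartbeats 0 in
/-- Every reduced Latin square of order 5 is cyclic or has a cell in its first row
lying on no transversal. -/
theorem reduced_cases :
    ∀ a11 : Fin 5, a11 ≠ 1 → a11 ≠ 1 → 
    ∀ a12 : Fin 5, a12 ≠ 1 → a12 ≠ a11 → a12 ≠ 2 → 
    ∀ a13 : Fin 5, a13 ≠ 1 → a13 ≠ a11 → a13 ≠ a12 → a13 ≠ 3 → 
    ∀ a14 : Fin 5, a14 ≠ 1 → a14 ≠ a11 → a14 ≠ a12 → a14 ≠ a13 → a14 ≠ 4 → 
    ∀ a21 : Fin 5, a21 ≠ 2 → a21 ≠ 1 → a21 ≠ a11 → 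
    ∀ a22 : Fin 5, a22 ≠ 2 → a22 ≠ a21 → a22 ≠ 2 → a22 ≠ a12 → 
    ∀ a23 : Fin 5, a23 ≠ 2 → a23 ≠ a21 → a23 ≠ a22 → a23 ≠ 3 → a23 ≠ a13 → 
    ∀ a24 : Fin 5, a24 ≠ 2 → a24 ≠ a21 → a24 ≠ a22 → a24 ≠ a23 → a24 ≠ 4 → a24 ≠ a14 → 
    ∀ a31 : Fin 5, a31 ≠ 3 → a31 ≠ 1 → a31 ≠ a11 → a31 ≠ a21 → 
    ∀ a32 : Fin 5, a32 ≠ 3 → a32 ≠ a31 → a32 ≠ 2 → a32 ≠ a12 → a32 ≠ a22 → 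
    ∀ a33 : Fin 5, a33 ≠ 3 → a33 ≠ a31 → a33 ≠ a32 → a33 ≠ 3 → a33 ≠ a13 → a33 ≠ a23 → 
    ∀ a34 : Fin 5, a34 ≠ 3 → a34 ≠ a31 → a34 ≠ a32 → a34 ≠ a33 → a34 ≠ 4 → a34 ≠ a14 → a34 ≠ a24 → 
    ∀ a41 : Fin 5, a41 ≠ 4 → a41 ≠ 1 → a41 ≠ a11 → a41 ≠ a21 → a41 ≠ a31 → 
    ∀ a42 : Fin 5, a42 ≠ 4 → a42 ≠ a41 → a42 ≠ 2 → a42 ≠ a12 → a42 ≠ a22 → a42 ≠ a32 → 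
    ∀ a43 : Fin 5, a43 ≠ 4 → a43 ≠ a41 → a43 ≠ a42 → a43 ≠ 3 → a43 ≠ a13 → a43 ≠ a23 → a43 ≠ a33 → 
    ∀ a44 : Fin 5, a44 ≠ 4 → a44 ≠ a41 → a44 ≠ a42 → a44 ≠ a43 → a44 ≠ 4 → a44 ≠ a14 → a44 ≠ a24 → a44 ≠ a34 → 
    CycM ![![0, 1, 2, 3, 4], ![1, a11, a12, a13, a14], ![2, a21, a22, a23, a24], ![3, a31, a32, a33, a34], ![4, a41, a42, a43, a44]] ∨
      ∃ c, NoTrans ![![0, 1, 2, 3, 4], ![1, a11, a12, a13, a14], ![2, a21, a22, a23, a24], ![3, a31, a32, a33, a34], ![4, a41, a42, a43, a44]] c := by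
  decide +kernel

theorem reduced_cases' (M : Fin 5 → Fin 5 → Fin 5)
    (hr : ∀ i j j', j ≠ j' → M i j ≠ M i j') (hc : ∀ i i' j, i ≠ i' → M i j ≠ M i' j)
    (h0 : ∀ j, M 0 j = j) (h1 : ∀ i, M i 0 = i) : CycM M ∨ ∃ c, NoTrans M c := by
  have hM : M = ![![0, 1, 2, 3, 4], ![1, M 1 1, M 1 2, M 1 3, M 1 4], ![2, M 2 1, M 2 2, M 2 3, M 2 4], ![3, M 3 1, M 3 2, M 3 3, M 3 4], ![4, M 4 1, M 4 2, M 4 3, M 4 4]] := by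
    funext i j
    fin_cases i <;> fin_cases j <;> first | rfl | exact h0 _ | exact h1 _
  have h := reduced_cases
    (M 1 1) (by simpa only [h1] using hr 1 1 0 (by decide)) (by simpa only [h0] using hc 1 0 1 (by decide)) 
    (M 1 2) (by simpa only [h1] using hr 1 2 0 (by decide)) (hr 1 2 1 (by decide)) (by simpa only [h0] using hc 1 0 2 (by decide)) 
    (M 1 3) (by simpa only [h1] using hr 1 3 0 (by decide)) (hr 1 3 1 (by decide)) (hr 1 3 2 (by decide)) (by simpa only [h0] using hc 1 0 3 (by decide)) 
    (M 1 4) (by simpa only [h1] using hr 1 4 0 (by decide)) (hr 1 4 1 (by decide)) (hr 1 4 2 (by decide)) (hr 1 4 3 (by decide)) (by simpa only [h0] using hc 1 0 4 (by decide)) 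
    (M 2 1) (by simpa only [h1] using hr 2 1 0 (by decide)) (by simpa only [h0] using hc 2 0 1 (by decide)) (hc 2 1 1 (by decide)) 
    (M 2 2) (by simpa only [h1] using hr 2 2 0 (by decide)) (hr 2 2 1 (by decide)) (by simpa only [h0] using hc 2 0 2 (by decide)) (hc 2 1 2 (by decide)) 
    (M 2 3) (by simpa only [h1] using hr 2 3 0 (by decide)) (hr 2 3 1 (by decide)) (hr 2 3 2 (by decide)) (by simpa only [h0] using hc 2 0 3 (by decide)) (hc 2 1 3 (by decide)) 
    (M 2 4) (by simpa only [h1] using hr 2 4 0 (by decide)) (hr 2 4 1 (by decide)) (hr 2 4 2 (by decide)) (hr 2 4 3 (by decide)) (by simpa only [h0] using hc 2 0 4 (by decide)) (hc 2 1 4 (by decide)) 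
    (M 3 1) (by simpa only [h1] using hr 3 1 0 (by decide)) (by simpa only [h0] using hc 3 0 1 (by decide)) (hc 3 1 1 (by decide)) (hc 3 2 1 (by decide)) 
    (M 3 2) (by simpa only [h1] using hr 3 2 0 (by decide)) (hr 3 2 1 (by decide)) (by simpa only [h0] using hc 3 0 2 (by decide)) (hc 3 1 2 (by decide)) (hc 3 2 2 (by decide)) 
    (M 3 3) (by simpa only [h1] using hr 3 3 0 (by decide)) (hr 3 3 1 (by decide)) (hr 3 3 2 (by decide)) (by simpa only [h0] using hc 3 0 3 (by decide)) (hc 3 1 3 (by decide)) (hc 3 2 3 (by decide)) 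
    (M 3 4) (by simpa only [h1] using hr 3 4 0 (by decide)) (hr 3 4 1 (by decide)) (hr 3 4 2 (by decide)) (hr 3 4 3 (by decide)) (by simpa only [h0] using hc 3 0 4 (by decide)) (hc 3 1 4 (by decide)) (hc 3 2 4 (by decide)) 
    (M 4 1) (by simpa only [h1] using hr 4 1 0 (by decide)) (by simpa only [h0] using hc 4 0 1 (by decide)) (hc 4 1 1 (by decide)) (hc 4 2 1 (by decide)) (hc 4 3 1 (by decide)) 
    (M 4 2) (by simpa only [h1] using hr 4 2 0 (by decide)) (hr 4 2 1 (by decide)) (by simpa only [h0] using hc 4 0 2 (by decide)) (hc 4 1 2 (by decide)) (hc 4 2 2 (by decide)) (hc 4 3 2 (by decide)) 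
    (M 4 3) (by simpa only [h1] using hr 4 3 0 (by decide)) (hr 4 3 1 (by decide)) (hr 4 3 2 (by decide)) (by simpa only [h0] using hc 4 0 3 (by decide)) (hc 4 1 3 (by decide)) (hc 4 2 3 (by decide)) (hc 4 3 3 (by decide)) 
    (M 4 4) (by simpa only [h1] using hr 4 4 0 (by decide)) (hr 4 4 1 (by decide)) (hr 4 4 2 (by decide)) (hr 4 4 3 (by decide)) (by simpa only [h0] using hc 4 0 4 (by decide)) (hc 4 1 4 (by decide)) (hc 4 2 4 (by decide)) (hc 4 3 4 (by decide)) 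
  rw [← hM] at h
  exact h


/-- A Latin square of order `k` (rows, columns and symbols drawn from the same
`k`-element type, e.g. `Fin k` or `ZMod k`): every row and every column is a
bijection. -/
def IsLatinSquare {α : Type*} (L : α → α → α) : Prop :=
  (∀ i, Function.Bijective fun j => L i j) ∧ (∀ j, Function.Bijective fun i => L i j)

/-- Two squares are orthogonal if `(i, j) ↦ (L i j, L' i j)` is a bijection. -/
def IsOrthogonal {α : Type*} (L L' : α → α → α) : Prop :=
  Function.Bijective fun p : α × α => (L p.1 p.2, L' p.1 p.2)

/-- The relation `∼` on Latin squares: `L ∼ L'` iff `L'` is obtained from `L` by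
permuting rows, permuting columns and relabelling symbols. -/
def LatinEquiv {α : Type*} (L L' : α → α → α) : Prop :=
  ∃ a b c : Equiv.Perm α, ∀ i j, L' i j = c (L (a i) (b j))

/-- One elementary move on an ordered pair of squares: simultaneous row
permutation, simultaneous column permutation, relabelling the symbols of either
square, transposing either square, or interchanging the squares. -/
inductive PairStep {α : Type*} :
    ((α → α → α) × (α → α → α)) → ((α → α → α) × (α → α → α)) → Prop
  | rows (P : (α → α → α) × (α → α → α)) (a : Equiv.Perm α) :
      PairStep P (fun i j => P.1 (a i) j, fun i j => P.2 (a i) j)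
  | cols (P : (α → α → α) × (α → α → α)) (b : Equiv.Perm α) :
      PairStep P (fun i j => P.1 i (b j), fun i j => P.2 i (b j))
  | relabelFst (P : (α → α → α) × (α → α → α)) (c : Equiv.Perm α) :
      PairStep P (fun i j => c (P.1 i j), P.2)
  | relabelSnd (P : (α → α → α) × (α → α → α)) (c : Equiv.Perm α) :
      PairStep P (P.1, fun i j => c (P.2 i j))
  | transposeFst (P : (α → α → α) × (α → α → α)) :
      PairStep P (fun i j => P.1 j i, P.2)
  | transposeSnd (P : (α → α → α) × (α → α → α)) :
      PairStep P (P.1, fun i j => P.2 j i)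
  | swap (P : (α → α → α) × (α → α → α)) :
      PairStep P (P.2, P.1)

/-- The equivalence relation `∼'` on ordered pairs of squares, generated by the
elementary moves `PairStep`. -/
def PairEquiv {α : Type*} (P Q : (α → α → α) × (α → α → α)) : Prop :=
  Relation.EqvGen PairStep P Q

/-- The cyclic square `C_c` on `ZMod k`: `C_c i j = j + c * i`. -/
def Csq (k : ℕ) (c : ZMod k) : ZMod k → ZMod k → ZMod k :=
  fun i j => j + c * i

/-- Ordered pairs of orthogonal Latin squares of order `k`. -/
def OLSPair (k : ℕ) :=
  {P : (Fin k → Fin k → Fin k) × (Fin k → Fin k → Fin k) //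
    IsLatinSquare P.1 ∧ IsLatinSquare P.2 ∧ IsOrthogonal P.1 P.2}

/-- `∼'` as a setoid on ordered pairs of orthogonal Latin squares. -/
def olsSetoid (k : ℕ) : Setoid (OLSPair k) where
  r P Q := PairEquiv P.val Q.val
  iseqv := ⟨fun _ => Relation.EqvGen.refl _,
            fun h => Relation.EqvGen.symm _ _ h,
            fun h h' => Relation.EqvGen.trans _ _ _ h h'⟩

/-- A transversal of a square: a permutation `f` of the columns such that
`i ↦ L i (f i)` is injective (hits every symbol exactly once). -/
def IsTransversal {α : Type*} (L : α → α → α) (f : Equiv.Perm α) : Prop :=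
  Function.Injective fun i => L i (f i)

/-- `L` admits `k` pairwise disjoint transversals. -/
def HasDisjointTransversals {k : ℕ} (L : Fin k → Fin k → Fin k) : Prop :=
  ∃ T : Fin k → Equiv.Perm (Fin k), (∀ m, IsTransversal L (T m)) ∧
    ∀ m m', m ≠ m' → ∀ i, T m i ≠ T m' i

/-- `G'_k`: Latin squares whose successive-row permutations `σ_{i,i+1}` all
equal one common permutation which is a single `k`-cycle. -/
def GPrime (k : ℕ) : Set (Fin k → Fin k → Fin k) :=
  {L | IsLatinSquare L ∧ ∃ σ : Equiv.Perm (Fin k), σ.IsCycle ∧ σ.support.card = k ∧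
    ∀ (i : ℕ) (h : i + 1 < k) (p : Fin k),
      σ (L ⟨i, Nat.lt_of_succ_lt h⟩ p) = L ⟨i + 1, h⟩ p}

/-- `G_k`: Latin squares `∼`-equivalent to an element of `G'_k`. -/
def GSet (k : ℕ) : Set (Fin k → Fin k → Fin k) :=
  {L | ∃ H ∈ GPrime k, LatinEquiv L H}

/-- The cyclic square `C_1`, written on `Fin k` via the identification of
`ZMod k` with `Fin k`: `C_1 i j = j + i (mod k)`. -/
def C1fin (k : ℕ) : Fin k → Fin k → Fin k :=
  fun i j => ⟨(j.1 + i.1) % k, Nat.mod_lt _ i.pos⟩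

/-- If a Latin square of order 5 has an orthogonal mate, then `L ∼ C₁`, the
cyclic square on `ZMod 5` (identified with `Fin 5`). -/
theorem equiv_cyclic_of_has_orthogonal_mate (L : Fin 5 → Fin 5 → Fin 5)
    (hL : IsLatinSquare L)
    (hmate : ∃ L' : Fin 5 → Fin 5 → Fin 5, IsLatinSquare L' ∧ IsOrthogonal L L') :
    LatinEquiv L (Csq 5 1) := by
  
  obtain ⟨L', hL', ho⟩ := hmate
  let b : Equiv.Perm (Fin 5) := (Equiv.ofBijective _ (hL.1 0)).symm
  have hb : ∀ j, L 0 (b j) = j := fun j => (Equiv.ofBijective _ (hL.1 0)).apply_symm_apply j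
  let a : Equiv.Perm (Fin 5) := (Equiv.ofBijective _ (hL.2 (b 0))).symm
  have ha : ∀ i, L (a i) (b 0) = i := fun i =>
    (Equiv.ofBijective _ (hL.2 (b 0))).apply_symm_apply i
  have ha0 : a 0 = 0 := (hL.2 (b 0)).1 ((ha 0).trans (hb 0).symm)
  have key := reduced_cases' (fun i j => L (a i) (b j))
    (fun i j j' hne h => hne (b.injective ((hL.1 (a i)).1 h)))
    (fun i i' j hne h => hne (a.injective ((hL.2 (b j)).1 h)))
    (fun j => by simp only [ha0, hb]) ha
  rcases key with ⟨hinj, hmul⟩ | ⟨c, hc⟩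
  · let φ : Equiv.Perm (Fin 5) := Equiv.ofBijective _
      (Finite.injective_iff_bijective.mp (fun i j h => hinj i j h))
    refine ⟨φ.trans a, φ.trans b, φ.symm, fun i j => ?_⟩
    have h2 : L (a (φ i)) (b (φ j)) = φ (j + i) := hmul i j
    have h3 : Csq 5 1 i j = (j + i : Fin 5) := by
      exact congrArg (fun x : ZMod 5 => (show ZMod 5 from j) + x) (one_mul (show ZMod 5 from i))
    rw [h3]
    simp only [Equiv.trans_apply]
    rw [h2, Equiv.symm_apply_apply]
  · exfalso
    have hf : ∀ i, ∃ j, L' (a i) (b j) = L' (a 0) (b c) := fun i => by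
      obtain ⟨j, hj⟩ := (hL'.1 (a i)).2 (L' (a 0) (b c))
      exact ⟨b.symm j, by simpa using hj⟩
    choose f hf using hf
    have hf0 : f 0 = c := b.injective ((hL'.1 (a 0)).1 (hf 0))
    have hcol : ∀ i i', i ≠ i' → f i ≠ f i' := fun i i' hne h => by
      have h1 := hf i
      rw [h, ← hf i'] at h1
      exact hne (a.injective ((hL'.2 (b (f i'))).1 h1))
    have hsym : ∀ i i', i ≠ i' → L (a i) (b (f i)) ≠ L (a i') (b (f i')) :=
        fun i i' hne h => by
      have h1 : (a i, b (f i)) = (a i', b (f i')) :=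
        ho.1 (Prod.ext h ((hf i).trans (hf i').symm))
      exact hne (a.injective (congrArg Prod.fst h1))
    subst hf0
    exact hc
      (f 1) (hcol 1 0 (by decide)) (hsym 1 0 (by decide))
      (f 2) (hcol 2 0 (by decide)) (hsym 2 0 (by decide)) (hcol 2 1 (by decide)) (hsym 2 1 (by decide))
      (f 3) (hcol 3 0 (by decide)) (hsym 3 0 (by decide)) (hcol 3 1 (by decide)) (hsym 3 1 (by decide)) (hcol 3 2 (by decide)) (hsym 3 2 (by decide))
      (f 4) (hcol 4 0 (by decide)) (hsym 4 0 (by decide)) (hcol 4 1 (by decide)) (hsym 4 1 (by decide)) (hcol 4 2 (by decide)) (hsym 4 2 (by decide)) (hcol 4 3 (by decide)) (hsym 4 3 (by decide))
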